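/- Let (Φ, Ψ) be a jointly stationary pair of random measures on ℝ^d (the law of (T_tΦ, T_tΨ) equals the law of (Φ, Ψ) for every t) with intensities λ_Φ := E[Φ([0,1)^d)] and λ_Ψ := E[Ψ([0,1)^d)] both in (0,∞), and assume the pair is ergodic: every measurable set A ⊆ M(ℝ^d) × M(ℝ^d) that is invariant under the diagonal shift action of ℝ^d satisfies P((Φ,Ψ) ∈ A) ∈ {0,1}. Then the following are equivalent: (a) λ_Φ = λ_Ψ; (b) there exists a translation-covariant measurable function K : M(ℝ^d) × M(ℝ^d) × ℝ^d × ℝ^d → [0,∞) (i.e. K(T_tφ, T_tψ, x − t, y − t) = K(φ, ψ, x, y)) such that almost surely ∫ K(Φ, Ψ, x, y) dΨ(y) = 1 for Φ-almost every x and ∫ K(Φ, Ψ, x, y) dΦ(x) = 1 for Ψ-almost every y (a balancing transport density from Φ to Ψ). -/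

import Mathlib

open MeasureTheory ENNReal

noncomputable section

/-- `ℝ^d`. -/
abbrev Vec (d : ℕ) := Fin d → ℝ

/-- The shift `T_t ψ`, defined by `(T_t ψ)(A) = ψ(A + t)`. -/
def shiftM {d : ℕ} (t : Vec d) (ψ : Measure (Vec d)) : Measure (Vec d) :=
  ψ.map (fun x => x - t)

/-- A measure is in `M(ℝ^d)` iff it is finite on bounded sets. -/
def BddFinite {d : ℕ} (ψ : Measure (Vec d)) : Prop :=
  ∀ s : Set (Vec d), Bornology.IsBounded s → ψ s < ⊤

/-- Translation covariance of `g : M(ℝ^d) × ℝ^d × ℝ^d → [0,∞]`. -/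
def Covariant3 {d : ℕ} (g : Measure (Vec d) → Vec d → Vec d → ℝ≥0∞) : Prop :=
  ∀ (t x y : Vec d) (ψ : Measure (Vec d)), g (shiftM t ψ) (x - t) (y - t) = g ψ x y

/-- A random measure `Ψ` on a probability space `(Ω, P)` is mass-stationary if the mass
transport principle holds for every translation-covariant measurable `g`. -/
def MassStationary {d : ℕ} {Ω : Type*} [MeasurableSpace Ω] (P : Measure Ω)
    (Ψ : Ω → Measure (Vec d)) : Prop :=
  ∀ g : Measure (Vec d) → Vec d → Vec d → ℝ≥0∞,
    Measurable (fun p : Measure (Vec d) × Vec d × Vec d => g p.1 p.2.1 p.2.2) →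
    Covariant3 g →
    ∫⁻ ω, (∫⁻ y, g (Ψ ω) 0 y ∂(Ψ ω)) ∂P = ∫⁻ ω, (∫⁻ y, g (Ψ ω) y 0 ∂(Ψ ω)) ∂P

/-- The unit box `[0,1)^d`. -/
def unitBox (d : ℕ) : Set (Vec d) := Set.univ.pi fun _ : Fin d => Set.Ico (0 : ℝ) 1

lemma bddFinite_iff {d : ℕ} (ψ : Measure (Vec d)) :
    BddFinite ψ ↔ ∀ n : ℕ, ψ (Metric.closedBall 0 n) < ⊤ := by
  constructor
  · intro h n
    exact h _ Metric.isBounded_closedBall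
  · intro h s hs
    obtain ⟨r, hr⟩ := hs.subset_closedBall 0
    obtain ⟨n, hn⟩ := exists_nat_ge r
    exact lt_of_le_of_lt (measure_mono (hr.trans (Metric.closedBall_subset_closedBall hn))) (h n)

lemma measurableSet_bddFinite (d : ℕ) : MeasurableSet {ψ : Measure (Vec d) | BddFinite ψ} := by
  simp_rw [bddFinite_iff, Set.ofPred_forall]
  refine MeasurableSet.iInter fun n => ?_
  exact measurableSet_lt (Measure.measurable_coe measurableSet_closedBall) measurable_const

lemma measurable_shiftM {d : ℕ} (t : Vec d) : Measurable (shiftM t : Measure (Vec d) → _) :=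
  Measure.measurable_map _ (measurable_id.sub_const t)

lemma lintegral_shiftM {d : ℕ} (t : Vec d) (ψ : Measure (Vec d)) (f : Vec d → ℝ≥0∞) :
    ∫⁻ x, f x ∂(shiftM t ψ) = ∫⁻ x, f (x - t) ∂ψ :=
  lintegral_map_equiv f (Homeomorph.subRight t).toMeasurableEquiv

lemma shiftM_apply {d : ℕ} (t : Vec d) (ψ : Measure (Vec d)) (s : Set (Vec d)) :
    shiftM t ψ s = ψ ((fun x => x - t) ⁻¹' s) :=
  (Homeomorph.subRight t).toMeasurableEquiv.map_apply s

lemma shiftM_shiftM {d : ℕ} (s t : Vec d) (ψ : Measure (Vec d)) :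
    shiftM s (shiftM t ψ) = shiftM (t + s) ψ := by
  ext A _
  simp only [shiftM_apply, ← Set.preimage_comp, Function.comp_def, sub_sub]

lemma shiftM_zero {d : ℕ} (ψ : Measure (Vec d)) :
    shiftM 0 ψ = ψ := by
  ext A _
  simp [shiftM_apply]

lemma BddFinite.shift {d : ℕ} {ψ : Measure (Vec d)} (h : BddFinite ψ) (t : Vec d) :
    BddFinite (shiftM t ψ) := by
  intro s hs
  rw [shiftM_apply]
  apply h
  obtain ⟨r, hr⟩ := hs.subset_closedBall 0
  refine Metric.isBounded_closedBall.subset (?_ : _ ⊆ Metric.closedBall t r)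
  intro x hx
  have := hr hx
  rw [mem_closedBall_zero_iff] at this
  rwa [mem_closedBall_iff_norm]

lemma bddFinite_shift_iff {d : ℕ} (ψ : Measure (Vec d)) (t : Vec d) :
    BddFinite (shiftM t ψ) ↔ BddFinite ψ := by
  refine ⟨fun h => ?_, fun h => h.shift t⟩
  have := h.shift (-t)
  rwa [shiftM_shiftM, add_neg_cancel, shiftM_zero] at this

/-- annuli -/
def annul (d : ℕ) : ℕ → Set (Vec d) := disjointed fun n : ℕ => Metric.closedBall (0 : Vec d) n

lemma measurableSet_annul (d n : ℕ) : MeasurableSet (annul d n) :=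
  MeasurableSet.disjointed (fun _ => measurableSet_closedBall) n

open ProbabilityTheory

/-- identity kernel -/
def idK (d : ℕ) : Kernel (Measure (Vec d)) (Vec d) := ⟨id, measurable_id⟩

lemma measurableSet_lvl (d : ℕ) (q : ℕ × ℕ) :
    MeasurableSet {ψ : Measure (Vec d) | (q.2 : ℝ≥0∞) ≤ ψ (annul d q.1) ∧
      ψ (annul d q.1) < q.2 + 1} := by
  have := Measure.measurable_coe (measurableSet_annul d q.1)
  exact (measurableSet_le measurable_const this).inter (measurableSet_lt this measurable_const)

open Classical in
/-- pieces -/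
def pieceK (d : ℕ) (q : ℕ × ℕ) : Kernel (Measure (Vec d)) (Vec d) :=
  Kernel.piecewise (measurableSet_lvl d q) ((idK d).restrict (measurableSet_annul d q.1)) 0

instance (d : ℕ) (q : ℕ × ℕ) : IsFiniteKernel (pieceK d q) := by
  refine ⟨⟨q.2 + 1, by finiteness, fun ψ => ?_⟩⟩
  rw [pieceK, Kernel.piecewise_apply']
  split_ifs with h
  · simp only [Set.mem_ofPred_eq] at h
    simpa [Kernel.restrict_apply, idK] using h.2.le
  · simp

open Classical in
/-- the s-finite kernel which is the identity on boundedly finite measures, zero otherwise. -/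
def nk (d : ℕ) : Kernel (Measure (Vec d)) (Vec d) :=
  Kernel.piecewise (measurableSet_bddFinite d) (Kernel.sum (pieceK d)) 0

instance (d : ℕ) : IsSFiniteKernel (nk d) := by
  unfold nk; infer_instance

open Classical in
lemma nk_of_not {d : ℕ} {ψ : Measure (Vec d)} (h : ¬ BddFinite ψ) : nk d ψ = 0 := by
  rw [nk, Kernel.piecewise_apply, if_neg (by simpa using h)]; rfl

open Classical in
lemma nk_of {d : ℕ} {ψ : Measure (Vec d)} (h : BddFinite ψ) : nk d ψ = ψ := by
  rw [nk, Kernel.piecewise_apply, if_pos (by simpa using h)]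
  ext s hs
  rw [Kernel.sum_apply' _ _ hs, ENNReal.tsum_prod (f := fun n m => pieceK d (n, m) ψ s)]
  have key : ∀ n, ∑' m, pieceK d (n, m) ψ s = ψ (s ∩ annul d n) := by
    intro n
    have hfin : ψ (annul d n) < ⊤ :=
      h _ (Metric.isBounded_closedBall.subset (disjointed_subset (fun n : ℕ => Metric.closedBall (0 : Vec d) n) n))
    have hle : ((⌊(ψ (annul d n)).toNNReal⌋₊ : ℕ) : ℝ≥0∞) ≤ ψ (annul d n) := by
      conv_rhs => rw [← ENNReal.coe_toNNReal hfin.ne]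
      exact_mod_cast Nat.floor_le zero_le
    have hlt : ψ (annul d n) < (⌊(ψ (annul d n)).toNNReal⌋₊ : ℕ) + 1 := by
      conv_lhs => rw [← ENNReal.coe_toNNReal hfin.ne]
      exact_mod_cast Nat.lt_floor_add_one _
    rw [tsum_eq_single ⌊(ψ (annul d n)).toNNReal⌋₊]
    · rw [pieceK, Kernel.piecewise_apply', if_pos ⟨hle, hlt⟩]
      simp [Kernel.restrict_apply, idK, Measure.restrict_apply hs]
    · intro m hm
      rw [pieceK, Kernel.piecewise_apply', if_neg]
      · simp
      · rintro ⟨h1, h2⟩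
        apply hm
        simp only at h1 h2
        have e1 := lt_of_le_of_lt h1 hlt
        have e2 := lt_of_le_of_lt hle h2
        norm_cast at e1 e2
        omega
  simp_rw [key]
  rw [← measure_iUnion]
  · rw [← Set.inter_iUnion, annul, iUnion_disjointed, Metric.iUnion_closedBall_nat, Set.inter_univ]
  · intro i j hij
    exact ((disjoint_disjointed _) hij).mono Set.inter_subset_right Set.inter_subset_right
  · exact fun n => hs.inter (measurableSet_annul d n)

lemma nk_shift {d : ℕ} (t : Vec d) (ψ : Measure (Vec d)) :
    nk d (shiftM t ψ) = shiftM t (nk d ψ) := by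
  by_cases h : BddFinite ψ
  · rw [nk_of h, nk_of (h.shift t)]
  · rw [nk_of_not h, nk_of_not (by rwa [bddFinite_shift_iff])]
    simp [shiftM]

lemma nk_bdd {d : ℕ} (ψ : Measure (Vec d)) : BddFinite (nk d ψ) := by
  by_cases h : BddFinite ψ
  · rwa [nk_of h]
  · rw [nk_of_not h]; intro s _; simp

section abstr

set_option linter.unusedSectionVars false

variable {d : ℕ} {X : Type*} [MeasurableSpace X]

/-- greedy remaining densities -/
def ab (κ₁ κ₂ : Kernel X (Vec d)) (c : X → Vec d → Vec d → ℝ≥0∞) :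
    ℕ → (X → Vec d → ℝ≥0∞) × (X → Vec d → ℝ≥0∞)
  | 0 => (fun _ _ => 1, fun _ _ => 1)
  | n + 1 =>
    (fun p x => (ab κ₁ κ₂ c n).1 p x -
        ∫⁻ y, (ab κ₁ κ₂ c n).1 p x * (ab κ₁ κ₂ c n).2 p y * c p x y ∂κ₂ p,
     fun p y => (ab κ₁ κ₂ c n).2 p y -
        ∫⁻ x, (ab κ₁ κ₂ c n).1 p x * (ab κ₁ κ₂ c n).2 p y * c p x y ∂κ₁ p)

/-- n-th transport step -/
def kst (κ₁ κ₂ : Kernel X (Vec d)) (c : X → Vec d → Vec d → ℝ≥0∞) (n : ℕ)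
    (p : X) (x y : Vec d) : ℝ≥0∞ :=
  (ab κ₁ κ₂ c n).1 p x * (ab κ₁ κ₂ c n).2 p y * c p x y

variable (κ₁ κ₂ : Kernel X (Vec d)) [IsSFiniteKernel κ₁] [IsSFiniteKernel κ₂]

lemma meas_int (κ : Kernel X (Vec d)) [IsSFiniteKernel κ] {f : X → Vec d → Vec d → ℝ≥0∞}
    (hf : Measurable fun q : X × Vec d × Vec d => f q.1 q.2.1 q.2.2) :
    Measurable fun q : X × Vec d => ∫⁻ y, f q.1 q.2 y ∂κ q.1 := by
  have : Measurable fun q : X × Vec d =>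
      ∫⁻ y, (fun r : (X × Vec d) × Vec d => f r.1.1 r.1.2 r.2) (q, y)
        ∂(κ.comap Prod.fst measurable_fst : Kernel (X × Vec d) (Vec d)) q := by
    refine Measurable.lintegral_kernel_prod_right' (κ := (κ.comap Prod.fst measurable_fst : Kernel (X × Vec d) (Vec d))) (f := fun r : (X × Vec d) × Vec d => f r.1.1 r.1.2 r.2) ?_
    exact hf.comp (by fun_prop : Measurable fun r : (X × Vec d) × Vec d => (r.1.1, r.1.2, r.2))
  exact this

lemma meas_int' (κ : Kernel X (Vec d)) [IsSFiniteKernel κ] {f : X → Vec d → Vec d → ℝ≥0∞}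
    (hf : Measurable fun q : X × Vec d × Vec d => f q.1 q.2.1 q.2.2) :
    Measurable fun q : X × Vec d => ∫⁻ x, f q.1 x q.2 ∂κ q.1 :=
  meas_int κ (f := fun p y x => f p x y)
    (hf.comp (by fun_prop : Measurable fun r : X × Vec d × Vec d => (r.1, r.2.2, r.2.1)))

variable {c : X → Vec d → Vec d → ℝ≥0∞}

lemma ab_meas (hc : Measurable fun q : X × Vec d × Vec d => c q.1 q.2.1 q.2.2) (n : ℕ) :
    Measurable (fun q : X × Vec d => (ab κ₁ κ₂ c n).1 q.1 q.2) ∧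
    Measurable (fun q : X × Vec d => (ab κ₁ κ₂ c n).2 q.1 q.2) ∧
    Measurable (fun q : X × Vec d × Vec d => kst κ₁ κ₂ c n q.1 q.2.1 q.2.2) := by
  have aux : ∀ n, Measurable (fun q : X × Vec d => (ab κ₁ κ₂ c n).1 q.1 q.2) ∧
    Measurable (fun q : X × Vec d => (ab κ₁ κ₂ c n).2 q.1 q.2) →
    Measurable (fun q : X × Vec d × Vec d => kst κ₁ κ₂ c n q.1 q.2.1 q.2.2) := by
    rintro n ⟨h1, h2⟩
    unfold kst
    exact ((h1.comp (by fun_prop : Measurable fun r : X × Vec d × Vec d => (r.1, r.2.1))).mul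
      (h2.comp (by fun_prop : Measurable fun r : X × Vec d × Vec d => (r.1, r.2.2)))).mul hc
  suffices h : _ ∧ _ from ⟨h.1, h.2, aux n h⟩
  induction n with
  | zero => exact ⟨measurable_const, measurable_const⟩
  | succ n ih =>
    have hk := aux n ih
    exact ⟨ih.1.sub (meas_int κ₂ hk), ih.2.sub (meas_int' κ₁ hk)⟩

lemma ab_le (n : ℕ) (p : X) (x : Vec d) :
    (ab κ₁ κ₂ c n).1 p x ≤ 1 ∧ (ab κ₁ κ₂ c n).2 p x ≤ 1 := by
  induction n with
  | zero => exact ⟨le_rfl, le_rfl⟩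
  | succ n ih => exact ⟨tsub_le_self.trans ih.1, tsub_le_self.trans ih.2⟩

lemma ab_anti (p : X) (x : Vec d) :
    (Antitone fun n => (ab κ₁ κ₂ c n).1 p x) ∧ (Antitone fun n => (ab κ₁ κ₂ c n).2 p x) :=
  ⟨antitone_nat_of_succ_le fun _ => tsub_le_self, antitone_nat_of_succ_le fun _ => tsub_le_self⟩

lemma int_le₂ (hc : Measurable fun q : X × Vec d × Vec d => c q.1 q.2.1 q.2.2)
    (p : X) (hc2 : ∀ x, ∫⁻ y, c p x y ∂κ₂ p ≤ 1) (n : ℕ) (x : Vec d) :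
    ∫⁻ y, kst κ₁ κ₂ c n p x y ∂κ₂ p ≤ (ab κ₁ κ₂ c n).1 p x := by
  calc ∫⁻ y, kst κ₁ κ₂ c n p x y ∂κ₂ p ≤ ∫⁻ y, (ab κ₁ κ₂ c n).1 p x * c p x y ∂κ₂ p := by
        refine lintegral_mono fun y => ?_
        unfold kst
        gcongr
        exact mul_le_of_le_one_right' (ab_le κ₁ κ₂ n p y).2
    _ = (ab κ₁ κ₂ c n).1 p x * ∫⁻ y, c p x y ∂κ₂ p := by
        rw [lintegral_const_mul]
        exact hc.comp (by fun_prop : Measurable fun y : Vec d => (p, x, y))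
    _ ≤ _ := mul_le_of_le_one_right' (hc2 x)

lemma int_le₁ (hc : Measurable fun q : X × Vec d × Vec d => c q.1 q.2.1 q.2.2)
    (p : X) (hc1 : ∀ y, ∫⁻ x, c p x y ∂κ₁ p ≤ 1) (n : ℕ) (y : Vec d) :
    ∫⁻ x, kst κ₁ κ₂ c n p x y ∂κ₁ p ≤ (ab κ₁ κ₂ c n).2 p y := by
  calc ∫⁻ x, kst κ₁ κ₂ c n p x y ∂κ₁ p ≤ ∫⁻ x, (ab κ₁ κ₂ c n).2 p y * c p x y ∂κ₁ p := by
        refine lintegral_mono fun x => ?_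
        unfold kst
        gcongr
        exact mul_le_of_le_one_left' (ab_le κ₁ κ₂ n p x).1
    _ = (ab κ₁ κ₂ c n).2 p y * ∫⁻ x, c p x y ∂κ₁ p := by
        rw [lintegral_const_mul]
        exact hc.comp (by fun_prop : Measurable fun x : Vec d => (p, x, y))
    _ ≤ _ := mul_le_of_le_one_right' (hc1 y)

lemma telescope (a k : ℕ → ℝ≥0∞) (h0 : a 0 = 1) (hk : ∀ n, k n ≤ a n)
    (ha : ∀ n, a (n + 1) = a n - k n) : ∑' n, k n + ⨅ n, a n = 1 := by
  have anti : Antitone a := antitone_nat_of_succ_le fun n => (ha n).trans_le tsub_le_self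
  have hs : ∀ n, ∑ i ∈ Finset.range n, k i + a n = 1 := by
    intro n
    induction n with
    | zero => simp [h0]
    | succ n ih => rw [Finset.sum_range_succ, ha, add_assoc, add_tsub_cancel_of_le (hk n), ih]
  have t1 := (ENNReal.summable (f := k)).hasSum.tendsto_sum_nat.add (tendsto_atTop_iInf anti)
  simp_rw [hs] at t1
  exact tendsto_nhds_unique t1 tendsto_const_nhds

/-- remaining densities -/
def aInf (κ₁ κ₂ : Kernel X (Vec d)) (c : X → Vec d → Vec d → ℝ≥0∞) (p : X) (x : Vec d) : ℝ≥0∞ :=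
  ⨅ n, (ab κ₁ κ₂ c n).1 p x
/-- remaining densities -/
def bInf (κ₁ κ₂ : Kernel X (Vec d)) (c : X → Vec d → Vec d → ℝ≥0∞) (p : X) (x : Vec d) : ℝ≥0∞ :=
  ⨅ n, (ab κ₁ κ₂ c n).2 p x
/-- total transport -/
def kTot (κ₁ κ₂ : Kernel X (Vec d)) (c : X → Vec d → Vec d → ℝ≥0∞) (p : X) (x y : Vec d) : ℝ≥0∞ :=
  ∑' n, kst κ₁ κ₂ c n p x y

lemma kTot_meas (hc : Measurable fun q : X × Vec d × Vec d => c q.1 q.2.1 q.2.2) :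
    Measurable (fun q : X × Vec d × Vec d => kTot κ₁ κ₂ c q.1 q.2.1 q.2.2) :=
  Measurable.tsum fun n => (ab_meas κ₁ κ₂ hc n).2.2

lemma aInf_meas (hc : Measurable fun q : X × Vec d × Vec d => c q.1 q.2.1 q.2.2) :
    Measurable (fun q : X × Vec d => aInf κ₁ κ₂ c q.1 q.2) :=
  Measurable.iInf fun n => (ab_meas κ₁ κ₂ hc n).1

lemma bInf_meas (hc : Measurable fun q : X × Vec d × Vec d => c q.1 q.2.1 q.2.2) :
    Measurable (fun q : X × Vec d => bInf κ₁ κ₂ c q.1 q.2) :=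
  Measurable.iInf fun n => (ab_meas κ₁ κ₂ hc n).2.1

lemma kTot_int₂ (hc : Measurable fun q : X × Vec d × Vec d => c q.1 q.2.1 q.2.2)
    (p : X) (hc2 : ∀ x, ∫⁻ y, c p x y ∂κ₂ p ≤ 1) (x : Vec d) :
    ∫⁻ y, kTot κ₁ κ₂ c p x y ∂κ₂ p + aInf κ₁ κ₂ c p x = 1 := by
  unfold kTot
  rw [lintegral_tsum]
  · exact telescope _ (fun n => ∫⁻ y, kst κ₁ κ₂ c n p x y ∂κ₂ p) rfl
      (fun n => int_le₂ κ₁ κ₂ hc p hc2 n x) (fun n => rfl)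
  · exact fun n => ((ab_meas κ₁ κ₂ hc n).2.2.comp
      (by fun_prop : Measurable fun y : Vec d => (p, x, y))).aemeasurable

lemma kTot_int₁ (hc : Measurable fun q : X × Vec d × Vec d => c q.1 q.2.1 q.2.2)
    (p : X) (hc1 : ∀ y, ∫⁻ x, c p x y ∂κ₁ p ≤ 1) (y : Vec d) :
    ∫⁻ x, kTot κ₁ κ₂ c p x y ∂κ₁ p + bInf κ₁ κ₂ c p y = 1 := by
  unfold kTot
  rw [lintegral_tsum]
  · exact telescope _ (fun n => ∫⁻ x, kst κ₁ κ₂ c n p x y ∂κ₁ p) rfl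
      (fun n => int_le₁ κ₁ κ₂ hc p hc1 n y) (fun n => rfl)
  · exact fun n => ((ab_meas κ₁ κ₂ hc n).2.2.comp
      (by fun_prop : Measurable fun x : Vec d => (p, x, y))).aemeasurable

lemma inf_zero_or (hc : Measurable fun q : X × Vec d × Vec d => c q.1 q.2.1 q.2.2)
    (p : X) (hc2 : ∀ x, ∫⁻ y, c p x y ∂κ₂ p ≤ 1) (hpos : ∀ x y, c p x y ≠ 0) :
    ∫⁻ x, aInf κ₁ κ₂ c p x ∂κ₁ p = 0 ∨ ∫⁻ y, bInf κ₁ κ₂ c p y ∂κ₂ p = 0 := by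
  by_cases h : ∀ x, aInf κ₁ κ₂ c p x = 0
  · left; simp [h]
  right
  push Not at h
  obtain ⟨x, hx⟩ := h
  have hfin : ∫⁻ y, kTot κ₁ κ₂ c p x y ∂κ₂ p ≠ ⊤ := by
    have := kTot_int₂ κ₁ κ₂ hc p hc2 x
    intro h; rw [h] at this; simp at this
  have hae := ae_lt_top ((kTot_meas κ₁ κ₂ hc).comp
      (by fun_prop : Measurable fun y : Vec d => (p, x, y))) hfin
  have hbm : Measurable (fun y => bInf κ₁ κ₂ c p y) := (bInf_meas κ₁ κ₂ hc).comp
      (by fun_prop : Measurable fun y : Vec d => (p, y))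
  rw [lintegral_eq_zero_iff hbm]
  filter_upwards [hae] with y hy
  by_contra hb
  have hb' : bInf κ₁ κ₂ c p y ≠ 0 := hb
  have : aInf κ₁ κ₂ c p x * bInf κ₁ κ₂ c p y * c p x y ≠ 0 :=
    mul_ne_zero (mul_ne_zero hx hb') (hpos x y)
  have h2 : ∑' _ : ℕ, aInf κ₁ κ₂ c p x * bInf κ₁ κ₂ c p y * c p x y = ⊤ :=
    ENNReal.tsum_const_eq_top_of_ne_zero this
  have h3 : ∑' _ : ℕ, aInf κ₁ κ₂ c p x * bInf κ₁ κ₂ c p y * c p x y ≤ kTot κ₁ κ₂ c p x y := by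
    refine ENNReal.tsum_le_tsum fun n => ?_
    unfold kst
    gcongr
    · exact iInf_le _ n
    · exact iInf_le _ n
  rw [h2] at h3
  exact (lt_of_le_of_lt h3 hy).ne rfl

/-! covariance -/

variable {T : Vec d → X → X}

lemma int_cov {κ : Kernel X (Vec d)} (hκ : ∀ t p, κ (T t p) = shiftM t (κ p))
    (t : Vec d) (p : X) (f : Vec d → ℝ≥0∞) :
    ∫⁻ x, f x ∂κ (T t p) = ∫⁻ x, f (x - t) ∂κ p := by
  rw [hκ, lintegral_shiftM]

lemma ab_cov (hκ₁ : ∀ t p, κ₁ (T t p) = shiftM t (κ₁ p))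
    (hκ₂ : ∀ t p, κ₂ (T t p) = shiftM t (κ₂ p))
    (hc : ∀ t p x y, c (T t p) (x - t) (y - t) = c p x y) (n : ℕ) (t : Vec d) (p : X) (x : Vec d) :
    (ab κ₁ κ₂ c n).1 (T t p) (x - t) = (ab κ₁ κ₂ c n).1 p x ∧
    (ab κ₁ κ₂ c n).2 (T t p) (x - t) = (ab κ₁ κ₂ c n).2 p x := by
  induction n generalizing x with
  | zero => exact ⟨rfl, rfl⟩
  | succ n ih =>
    constructor
    · simp only [ab]
      rw [int_cov hκ₂]
      simp only [hc, (ih _).1, (ih _).2]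
    · simp only [ab]
      rw [int_cov hκ₁]
      simp only [hc, (ih _).1, (ih _).2]

end abstr

section mtp

variable {d : ℕ} {X : Type*} [MeasurableSpace X]

set_option linter.unusedSectionVars false

open Classical in
/-- indicator of distance at most r -/
def ind (r : ℕ) (x y : Vec d) : ℝ≥0∞ := if dist x y ≤ r then 1 else 0

lemma ind_symm (r : ℕ) (x y : Vec d) : ind r x y = ind r y x := by
  simp [ind, dist_comm]

lemma ind_shift (r : ℕ) (x y t : Vec d) : ind r (x - t) (y - t) = ind r x y := by
  simp [ind]

lemma ind_meas (r : ℕ) : Measurable fun q : Vec d × Vec d => ind r q.1 q.2 := by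
  unfold ind
  exact Measurable.ite (measurableSet_le (measurable_fst.dist measurable_snd) measurable_const)
    measurable_const measurable_const

/-- local mass -/
def lmass (κ : Kernel X (Vec d)) (r : ℕ) (p : X) (x : Vec d) : ℝ≥0∞ := ∫⁻ y, ind r x y ∂κ p

/-- base kernel -/
def cker (κ₁ κ₂ : Kernel X (Vec d)) (p : X) (x y : Vec d) : ℝ≥0∞ :=
  ∑' r : ℕ, (2⁻¹ : ℝ≥0∞) ^ (r + 1) *
    (ind r x y * ((1 + lmass κ₂ r p x)⁻¹ * (1 + lmass κ₁ r p y)⁻¹))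

variable (κ₁ κ₂ : Kernel X (Vec d)) [IsSFiniteKernel κ₁] [IsSFiniteKernel κ₂]

lemma lmass_meas (κ : Kernel X (Vec d)) [IsSFiniteKernel κ] (r : ℕ) :
    Measurable fun q : X × Vec d => lmass κ r q.1 q.2 :=
  meas_int κ (f := fun _ x y => ind r x y) ((ind_meas r).comp measurable_snd)

lemma cker_meas : Measurable fun q : X × Vec d × Vec d => cker κ₁ κ₂ q.1 q.2.1 q.2.2 := by
  refine Measurable.tsum fun r => ?_
  have h1 := (lmass_meas κ₂ r).comp
    (by fun_prop : Measurable fun r : X × Vec d × Vec d => (r.1, r.2.1))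
  have h2 := (lmass_meas κ₁ r).comp
    (by fun_prop : Measurable fun r : X × Vec d × Vec d => (r.1, r.2.2))
  have h3 := (ind_meas (d := d) r).comp (measurable_snd : Measurable fun q : X × Vec d × Vec d => q.2)
  exact (h3.mul ((h1.const_add 1).inv.mul (h2.const_add 1).inv)).const_mul _

lemma geo : ∑' r : ℕ, (2⁻¹ : ℝ≥0∞) ^ (r + 1) = 1 := by
  rw [ENNReal.tsum_geometric_add_one, ENNReal.one_sub_inv_two, inv_inv]
  exact ENNReal.inv_mul_cancel (by simp) (by simp)

lemma inv_one_add_le (a : ℝ≥0∞) : (1 + a)⁻¹ ≤ 1 := by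
  rw [ENNReal.inv_le_one]; exact le_self_add

lemma inv_one_add_mul_le (a : ℝ≥0∞) : a * (1 + a)⁻¹ ≤ 1 := by
  rw [← div_eq_mul_inv]
  exact ENNReal.div_le_of_le_mul (by rw [one_mul]; exact le_add_self)

lemma cker_int₂ (p : X) (x : Vec d) : ∫⁻ y, cker κ₁ κ₂ p x y ∂κ₂ p ≤ 1 := by
  have hi : ∀ r, Measurable fun y => ind r x y := fun r =>
    (ind_meas r).comp (by fun_prop : Measurable fun y : Vec d => (x, y))
  calc ∫⁻ y, cker κ₁ κ₂ p x y ∂κ₂ p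
      ≤ ∫⁻ y, ∑' r : ℕ, (2⁻¹ : ℝ≥0∞) ^ (r + 1) * (ind r x y * (1 + lmass κ₂ r p x)⁻¹) ∂κ₂ p := by
        refine lintegral_mono fun y => ENNReal.tsum_le_tsum fun r => ?_
        gcongr
        exact mul_le_of_le_one_right' (inv_one_add_le _)
    _ = ∑' r : ℕ, (2⁻¹ : ℝ≥0∞) ^ (r + 1) * (lmass κ₂ r p x * (1 + lmass κ₂ r p x)⁻¹) := by
        rw [lintegral_tsum fun r => (((hi r).mul_const _).const_mul _).aemeasurable]
        congr 1; ext r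
        rw [lintegral_const_mul _ ((hi r).mul_const _), lintegral_mul_const _ (hi r)]
        rfl
    _ ≤ ∑' r : ℕ, (2⁻¹ : ℝ≥0∞) ^ (r + 1) :=
        ENNReal.tsum_le_tsum fun r => mul_le_of_le_one_right' (inv_one_add_mul_le _)
    _ = 1 := geo

lemma cker_symm (p : X) (x y : Vec d) : cker κ₁ κ₂ p x y = cker κ₂ κ₁ p y x := by
  unfold cker
  congr 1; ext r
  rw [ind_symm, mul_comm (_)⁻¹]

lemma cker_int₁ (p : X) (y : Vec d) : ∫⁻ x, cker κ₁ κ₂ p x y ∂κ₁ p ≤ 1 := by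
  simp_rw [cker_symm κ₁ κ₂]
  exact cker_int₂ κ₂ κ₁ p y

lemma lmass_fin {κ : Kernel X (Vec d)} {p : X} (h : BddFinite (κ p)) (r : ℕ) (x : Vec d) :
    lmass κ r p x ≠ ⊤ := by
  have : lmass κ r p x ≤ κ p (Metric.closedBall x r) := by
    rw [← lintegral_indicator_one measurableSet_closedBall]
    refine lintegral_mono fun y => ?_
    rw [ind_symm]
    unfold ind
    split_ifs with h
    · rw [Set.indicator_of_mem (by exact h)]; rfl
    · exact zero_le
  exact (lt_of_le_of_lt this (h _ Metric.isBounded_closedBall)).ne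

lemma cker_pos {p : X} (h1 : BddFinite (κ₁ p)) (h2 : BddFinite (κ₂ p)) (x y : Vec d) :
    cker κ₁ κ₂ p x y ≠ 0 := by
  unfold cker
  obtain ⟨r, hr⟩ := exists_nat_ge (dist x y)
  rw [Ne, ENNReal.tsum_eq_zero]
  push Not
  refine ⟨r, mul_ne_zero (pow_ne_zero _ (by simp)) (mul_ne_zero ?_ (mul_ne_zero ?_ ?_))⟩
  · simp [ind, hr]
  · simpa using lmass_fin h2 r x
  · simpa using lmass_fin h1 r y

variable {T : Vec d → X → X}

lemma cker_cov (hκ₁ : ∀ t p, κ₁ (T t p) = shiftM t (κ₁ p))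
    (hκ₂ : ∀ t p, κ₂ (T t p) = shiftM t (κ₂ p)) (t : Vec d) (p : X) (x y : Vec d) :
    cker κ₁ κ₂ (T t p) (x - t) (y - t) = cker κ₁ κ₂ p x y := by
  unfold cker lmass
  simp_rw [int_cov hκ₁, int_cov hκ₂, ind_shift]

/-- box indicator -/
def bx (x : Vec d) : ℝ≥0∞ := (unitBox d).indicator 1 x

lemma measurableSet_unitBox : MeasurableSet (unitBox d) :=
  MeasurableSet.univ_pi fun _ => measurableSet_Ico

lemma bx_meas : Measurable (bx : Vec d → ℝ≥0∞) :=
  measurable_one.indicator measurableSet_unitBox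

/-- lattice vectors -/
def zv (z : Fin d → ℤ) : Vec d := fun i => (z i : ℝ)

lemma bx_sum (x : Vec d) : ∑' z : Fin d → ℤ, bx (x - zv z) = 1 := by
  rw [tsum_eq_single (fun i => ⌊x i⌋)]
  · unfold bx
    rw [Set.indicator_of_mem]; rfl
    intro i _
    simp only [Pi.sub_apply, zv, Set.mem_Ico]
    exact ⟨by linarith [Int.floor_le (x i)], by linarith [Int.lt_floor_add_one (x i)]⟩
  · intro z hz
    apply Set.indicator_of_notMem
    intro h
    apply hz
    ext i
    have := h i (Set.mem_univ i)
    simp only [Pi.sub_apply, zv, Set.mem_Ico] at this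
    symm
    rw [Int.floor_eq_iff]
    exact ⟨by linarith, by linarith⟩

lemma bx_sum' (x : Vec d) : ∑' z : Fin d → ℤ, bx (x - -zv z) = 1 := by
  rw [← bx_sum x, ← (Equiv.neg (Fin d → ℤ)).tsum_eq]
  congr 1; ext z; congr 1
  ext i; simp [zv]

lemma triple_tsum (μ : Measure X) (g : (Fin d → ℤ) → X → Vec d → Vec d → ℝ≥0∞)
    (hg : ∀ z, Measurable fun q : X × Vec d × Vec d => g z q.1 q.2.1 q.2.2) :
    ∫⁻ p, ∫⁻ x, ∫⁻ y, ∑' z, g z p x y ∂κ₂ p ∂κ₁ p ∂μ =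
      ∑' z, ∫⁻ p, ∫⁻ x, ∫⁻ y, g z p x y ∂κ₂ p ∂κ₁ p ∂μ := by
  have h1 : ∀ p x, ∫⁻ y, ∑' z, g z p x y ∂κ₂ p = ∑' z, ∫⁻ y, g z p x y ∂κ₂ p := fun p x =>
    lintegral_tsum fun z => ((hg z).comp
      (by fun_prop : Measurable fun y : Vec d => (p, x, y))).aemeasurable
  have h2 : ∀ p, ∫⁻ x, ∑' z, ∫⁻ y, g z p x y ∂κ₂ p ∂κ₁ p =
      ∑' z, ∫⁻ x, ∫⁻ y, g z p x y ∂κ₂ p ∂κ₁ p := fun p =>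
    lintegral_tsum fun z => ((meas_int κ₂ (hg z)).comp
      (by fun_prop : Measurable fun x : Vec d => (p, x))).aemeasurable
  simp_rw [h1, h2]
  exact lintegral_tsum fun z =>
    (Measurable.lintegral_kernel_prod_right' (meas_int κ₂ (hg z))).aemeasurable

lemma mtp (μ : Measure X) (hT : ∀ t, Measurable (T t)) (hμ : ∀ t, μ.map (T t) = μ)
    (hκ₁ : ∀ t p, κ₁ (T t p) = shiftM t (κ₁ p))
    (hκ₂ : ∀ t p, κ₂ (T t p) = shiftM t (κ₂ p))
    {k : X → Vec d → Vec d → ℝ≥0∞}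
    (hk : Measurable fun q : X × Vec d × Vec d => k q.1 q.2.1 q.2.2)
    (hkc : ∀ t p x y, k (T t p) (x - t) (y - t) = k p x y) :
    ∫⁻ p, ∫⁻ x, bx x * ∫⁻ y, k p x y ∂κ₂ p ∂κ₁ p ∂μ =
      ∫⁻ p, ∫⁻ y, bx y * ∫⁻ x, k p x y ∂κ₁ p ∂κ₂ p ∂μ := by
  have mx : Measurable fun q : X × Vec d × Vec d => q.2.1 := by fun_prop
  have my : Measurable fun q : X × Vec d × Vec d => q.2.2 := by fun_prop
  have m1 : ∀ z : Fin d → ℤ, Measurable fun q : X × Vec d × Vec d =>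
      bx (q.2.2 - zv z) * (bx q.2.1 * k q.1 q.2.1 q.2.2) := fun z =>
    (bx_meas.comp (my.sub_const _)).mul ((bx_meas.comp mx).mul hk)
  have m2 : ∀ z : Fin d → ℤ, Measurable fun q : X × Vec d × Vec d =>
      bx (q.2.1 - -zv z) * (bx q.2.2 * k q.1 q.2.1 q.2.2) := fun z =>
    (bx_meas.comp (mx.sub_const _)).mul ((bx_meas.comp my).mul hk)
  have kx : ∀ p x, Measurable fun y => k p x y := fun p x =>
    hk.comp (by fun_prop : Measurable fun y : Vec d => (p, x, y))
  have ky : ∀ p y, Measurable fun x => k p x y := fun p y =>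
    hk.comp (by fun_prop : Measurable fun x : Vec d => (p, x, y))
  calc ∫⁻ p, ∫⁻ x, bx x * ∫⁻ y, k p x y ∂κ₂ p ∂κ₁ p ∂μ
      = ∫⁻ p, ∫⁻ x, ∫⁻ y, ∑' z : Fin d → ℤ, bx (y - zv z) * (bx x * k p x y) ∂κ₂ p ∂κ₁ p ∂μ := by
        simp_rw [ENNReal.tsum_mul_right, bx_sum, one_mul]
        congr 1; ext p; congr 1; ext x
        rw [lintegral_const_mul _ (kx p x)]
    _ = ∑' z : Fin d → ℤ, ∫⁻ p, ∫⁻ x, ∫⁻ y, bx (y - zv z) * (bx x * k p x y) ∂κ₂ p ∂κ₁ p ∂μ :=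
        triple_tsum κ₁ κ₂ μ (fun z p x y => bx (y - zv z) * (bx x * k p x y)) m1
    _ = ∑' z : Fin d → ℤ, ∫⁻ p, ∫⁻ x, ∫⁻ y, bx (x - -zv z) * (bx y * k p x y) ∂κ₂ p ∂κ₁ p ∂μ := by
        congr 1; ext z
        have hF : Measurable fun p => ∫⁻ x, ∫⁻ y, bx (y - zv z) * (bx x * k p x y) ∂κ₂ p ∂κ₁ p :=
          Measurable.lintegral_kernel_prod_right' (meas_int κ₂
            (f := fun p x y => bx (y - zv z) * (bx x * k p x y)) (m1 z))
        conv_lhs => rw [← hμ (-zv z)]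
        rw [lintegral_map hF (hT _)]
        congr 1; ext p
        rw [int_cov hκ₁]
        congr 1; ext x
        rw [int_cov hκ₂]
        congr 1; ext y
        rw [hkc, show y - -zv z - zv z = y by abel]
        ring
    _ = ∫⁻ p, ∫⁻ x, ∫⁻ y, ∑' z : Fin d → ℤ, bx (x - -zv z) * (bx y * k p x y) ∂κ₂ p ∂κ₁ p ∂μ :=
        (triple_tsum κ₁ κ₂ μ (fun z p x y => bx (x - -zv z) * (bx y * k p x y)) m2).symm
    _ = ∫⁻ p, ∫⁻ x, ∫⁻ y, bx y * k p x y ∂κ₂ p ∂κ₁ p ∂μ := by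
        simp_rw [ENNReal.tsum_mul_right, bx_sum', one_mul]
    _ = ∫⁻ p, ∫⁻ y, bx y * ∫⁻ x, k p x y ∂κ₁ p ∂κ₂ p ∂μ := by
        congr 1; ext p
        rw [lintegral_lintegral_swap]
        · congr 1; ext y
          rw [lintegral_const_mul _ (ky p y)]
        · exact (((bx_meas.comp my).mul hk).comp
            (by fun_prop : Measurable fun q : Vec d × Vec d => (p, q.1, q.2))).aemeasurable

lemma box_zero (κ : Kernel X (Vec d)) [IsSFiniteKernel κ] (μ : Measure X)
    (hT : ∀ t, Measurable (T t)) (hμ : ∀ t, μ.map (T t) = μ)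
    (hκ : ∀ t p, κ (T t p) = shiftM t (κ p)) {f : X → Vec d → ℝ≥0∞}
    (hf : Measurable fun q : X × Vec d => f q.1 q.2)
    (hfc : ∀ t p x, f (T t p) (x - t) = f p x)
    (h0 : ∫⁻ p, ∫⁻ x, bx x * f p x ∂κ p ∂μ = 0) :
    ∀ᵐ p ∂μ, ∫⁻ x, f p x ∂κ p = 0 := by
  have m1 : ∀ t : Vec d, Measurable fun q : X × Vec d => bx (q.2 - t) * f q.1 q.2 := fun t =>
    (bx_meas.comp (measurable_snd.sub_const _)).mul hf
  have m2 : ∀ t : Vec d, Measurable fun p : X => ∫⁻ x, bx (x - t) * f p x ∂κ p := fun t =>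
    Measurable.lintegral_kernel_prod_right' (m1 t)
  have hz : ∀ t : Vec d, ∫⁻ p, ∫⁻ x, bx (x - t) * f p x ∂κ p ∂μ = 0 := by
    intro t
    rw [← h0]
    conv_rhs => rw [← hμ t]
    have := m2 0
    simp only [sub_zero] at this
    rw [lintegral_map this (hT _)]
    congr 1; ext p
    rw [int_cov hκ]
    simp_rw [hfc]
  have hall : ∀ᵐ p ∂μ, ∀ z : Fin d → ℤ, ∫⁻ x, bx (x - zv z) * f p x ∂κ p = 0 := by
    rw [ae_all_iff]
    intro z
    exact (lintegral_eq_zero_iff (m2 _)).1 (hz _)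
  filter_upwards [hall] with p hp
  calc ∫⁻ x, f p x ∂κ p = ∫⁻ x, ∑' z : Fin d → ℤ, bx (x - zv z) * f p x ∂κ p := by
        simp_rw [ENNReal.tsum_mul_right, bx_sum, one_mul]
    _ = ∑' z : Fin d → ℤ, ∫⁻ x, bx (x - zv z) * f p x ∂κ p :=
        lintegral_tsum fun z => ((m1 (zv z)).comp
          (by fun_prop : Measurable fun x : Vec d => (p, x))).aemeasurable
    _ = 0 := by simp [hp]

end mtp

/-- diagonal shift -/
def dsh {d : ℕ} (t : Vec d) (p : Measure (Vec d) × Measure (Vec d)) :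
    Measure (Vec d) × Measure (Vec d) := (shiftM t p.1, shiftM t p.2)

lemma dsh_meas {d : ℕ} (t : Vec d) : Measurable (dsh t) :=
  ((measurable_shiftM t).comp measurable_fst).prodMk ((measurable_shiftM t).comp measurable_snd)

/-- first kernel -/
def nk₁ (d : ℕ) : Kernel (Measure (Vec d) × Measure (Vec d)) (Vec d) :=
  (nk d).comap Prod.fst measurable_fst
/-- second kernel -/
def nk₂ (d : ℕ) : Kernel (Measure (Vec d) × Measure (Vec d)) (Vec d) :=
  (nk d).comap Prod.snd measurable_snd

instance (d : ℕ) : IsSFiniteKernel (nk₁ d) := by unfold nk₁; infer_instance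
instance (d : ℕ) : IsSFiniteKernel (nk₂ d) := by unfold nk₂; infer_instance

lemma nk₁_cov {d : ℕ} (t : Vec d) (p) : nk₁ d (dsh t p) = shiftM t (nk₁ d p) := nk_shift t p.1
lemma nk₂_cov {d : ℕ} (t : Vec d) (p) : nk₂ d (dsh t p) = shiftM t (nk₂ d p) := nk_shift t p.2

lemma lint_bx {d : ℕ} (ψ : Measure (Vec d)) : ∫⁻ x, bx x ∂ψ = ψ (unitBox d) :=
  lintegral_indicator_one measurableSet_unitBox

lemma bx_int_meas {d : ℕ} {X : Type*} [MeasurableSpace X] (κ : Kernel X (Vec d))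
    [IsSFiniteKernel κ] {f : X → Vec d → ℝ≥0∞} (hf : Measurable fun q : X × Vec d => f q.1 q.2) :
    Measurable fun p => ∫⁻ x, bx x * f p x ∂κ p :=
  Measurable.lintegral_kernel_prod_right' ((bx_meas.comp measurable_snd).mul hf)

/-- balancing transport densities.  Let `(Φ, Ψ)` be a jointly stationary
ergodic pair of random measures on `ℝ^d` with intensities `λ_Φ, λ_Ψ ∈ (0,∞)`.  Then
`λ_Φ = λ_Ψ` iff there is a translation-covariant measurable
`K : M(ℝ^d) × M(ℝ^d) × ℝ^d × ℝ^d → [0,∞)` such that a.s. `∫ K Φ Ψ x y dΨ(y) = 1` for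
`Φ`-a.e. `x` and `∫ K Φ Ψ x y dΦ(x) = 1` for `Ψ`-a.e. `y`. -/
theorem stmt16 {d : ℕ} {Ω : Type*} [MeasurableSpace Ω] (P : Measure Ω) [IsProbabilityMeasure P]
    (Φ Ψ : Ω → Measure (Vec d)) (hΦm : Measurable Φ) (hΨm : Measurable Ψ)
    (hbfΦ : ∀ᵐ ω ∂P, BddFinite (Φ ω)) (hbfΨ : ∀ᵐ ω ∂P, BddFinite (Ψ ω))
    (hstat : ∀ t : Vec d,
      P.map (fun ω => (shiftM t (Φ ω), shiftM t (Ψ ω))) = P.map (fun ω => (Φ ω, Ψ ω)))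
    (herg : ∀ A : Set (Measure (Vec d) × Measure (Vec d)), MeasurableSet A →
      (∀ (t : Vec d) (p : Measure (Vec d) × Measure (Vec d)),
        p ∈ A ↔ (shiftM t p.1, shiftM t p.2) ∈ A) →
      P {ω | (Φ ω, Ψ ω) ∈ A} = 0 ∨ P {ω | (Φ ω, Ψ ω) ∈ A} = 1)
    (lΦ lΨ : ℝ≥0∞)
    (hlΦ : lΦ = ∫⁻ ω, Φ ω (unitBox d) ∂P) (hlΨ : lΨ = ∫⁻ ω, Ψ ω (unitBox d) ∂P)
    (hΦpos : 0 < lΦ) (hΦfin : lΦ < ⊤) (hΨpos : 0 < lΨ) (hΨfin : lΨ < ⊤) :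
    lΦ = lΨ ↔
      ∃ K : Measure (Vec d) → Measure (Vec d) → Vec d → Vec d → ℝ≥0∞,
        Measurable (fun p : (Measure (Vec d) × Measure (Vec d)) × Vec d × Vec d =>
          K p.1.1 p.1.2 p.2.1 p.2.2) ∧
        (∀ (φ ψ : Measure (Vec d)) (x y : Vec d), K φ ψ x y < ⊤) ∧
        (∀ (t x y : Vec d) (φ ψ : Measure (Vec d)),
          K (shiftM t φ) (shiftM t ψ) (x - t) (y - t) = K φ ψ x y) ∧
        ∀ᵐ ω ∂P,
          (∀ᵐ x ∂(Φ ω), ∫⁻ y, K (Φ ω) (Ψ ω) x y ∂(Ψ ω) = 1) ∧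
          (∀ᵐ y ∂(Ψ ω), ∫⁻ x, K (Φ ω) (Ψ ω) x y ∂(Φ ω) = 1) := by
  classical
  have hpm : Measurable fun ω => (Φ ω, Ψ ω) := hΦm.prodMk hΨm
  set μ := P.map (fun ω => (Φ ω, Ψ ω)) with hμdef
  have hμ : ∀ t : Vec d, μ.map (dsh t) = μ := by
    intro t
    rw [hμdef, Measure.map_map (dsh_meas t) hpm, ← hμdef, ← hstat t]
    rfl
  have e1 : ∀ᵐ ω ∂P, nk₁ d (Φ ω, Ψ ω) = Φ ω := by
    filter_upwards [hbfΦ] with ω h using nk_of h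
  have e2 : ∀ᵐ ω ∂P, nk₂ d (Φ ω, Ψ ω) = Ψ ω := by
    filter_upwards [hbfΨ] with ω h using nk_of h
  constructor
  · intro hl
    set κ₁ := nk₁ d with hκ₁def
    set κ₂ := nk₂ d with hκ₂def
    set c := cker κ₁ κ₂ with hcdef
    have hcm := cker_meas κ₁ κ₂
    have hcc : ∀ t p x y, c (dsh t p) (x - t) (y - t) = c p x y := cker_cov κ₁ κ₂ nk₁_cov nk₂_cov
    have habc := ab_cov κ₁ κ₂ nk₁_cov nk₂_cov hcc
    have hac : ∀ t p x, aInf κ₁ κ₂ c (dsh t p) (x - t) = aInf κ₁ κ₂ c p x := by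
      intro t p x; unfold aInf; simp_rw [(habc _ _ _ _).1]
    have hbc : ∀ t p x, bInf κ₁ κ₂ c (dsh t p) (x - t) = bInf κ₁ κ₂ c p x := by
      intro t p x; unfold bInf; simp_rw [(habc _ _ _ _).2]
    have hkc : ∀ t p x y, kTot κ₁ κ₂ c (dsh t p) (x - t) (y - t) = kTot κ₁ κ₂ c p x y := by
      intro t p x y; unfold kTot kst; simp_rw [(habc _ _ _ _).1, (habc _ _ _ _).2, hcc]
    have hkm := kTot_meas κ₁ κ₂ hcm
    have ham := aInf_meas κ₁ κ₂ hcm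
    have hbm := bInf_meas κ₁ κ₂ hcm
    have hi1 := fun p => kTot_int₁ κ₁ κ₂ hcm p (cker_int₁ κ₁ κ₂ p)
    have hi2 := fun p => kTot_int₂ κ₁ κ₂ hcm p (cker_int₂ κ₁ κ₂ p)
    rw [← hcdef] at hi1 hi2 hkm ham hbm
    have hM := mtp κ₁ κ₂ μ dsh_meas hμ nk₁_cov nk₂_cov hkm hkc
    have hzo := fun p => inf_zero_or κ₁ κ₂ hcm p (cker_int₂ κ₁ κ₂ p)
      (cker_pos κ₁ κ₂ (nk_bdd p.1) (nk_bdd p.2))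
    rw [← hcdef] at hzo
    have iA : Measurable fun p => ∫⁻ x, aInf κ₁ κ₂ c p x ∂κ₁ p :=
      Measurable.lintegral_kernel_prod_right' ham
    have iB : Measurable fun p => ∫⁻ x, bInf κ₁ κ₂ c p x ∂κ₂ p :=
      Measurable.lintegral_kernel_prod_right' hbm
    -- intensities
    have sA : ∫⁻ p, ∫⁻ x, bx x * ∫⁻ y, kTot κ₁ κ₂ c p x y ∂κ₂ p ∂κ₁ p ∂μ
        + ∫⁻ p, ∫⁻ x, bx x * aInf κ₁ κ₂ c p x ∂κ₁ p ∂μ = lΦ := by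
      rw [← lintegral_add_left (bx_int_meas κ₁ (meas_int κ₂ hkm)), hlΦ]
      have : ∀ p, ∫⁻ x, bx x * ∫⁻ y, kTot κ₁ κ₂ c p x y ∂κ₂ p ∂κ₁ p
          + ∫⁻ x, bx x * aInf κ₁ κ₂ c p x ∂κ₁ p = κ₁ p (unitBox d) := by
        intro p
        rw [← lintegral_add_left, ← lint_bx]
        · simp_rw [← mul_add, hi2, mul_one]
        · exact bx_meas.mul ((meas_int κ₂ hkm).comp
            (by fun_prop : Measurable fun x : Vec d => (p, x)))
      simp_rw [this]
      rw [lintegral_map (κ₁.measurable_coe measurableSet_unitBox) hpm]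
      apply lintegral_congr_ae
      filter_upwards [e1] with ω h
      rw [h]
    have sB : ∫⁻ p, ∫⁻ y, bx y * ∫⁻ x, kTot κ₁ κ₂ c p x y ∂κ₁ p ∂κ₂ p ∂μ
        + ∫⁻ p, ∫⁻ x, bx x * bInf κ₁ κ₂ c p x ∂κ₂ p ∂μ = lΨ := by
      rw [← lintegral_add_left (bx_int_meas κ₂ (meas_int' κ₁ hkm)), hlΨ]
      have : ∀ p, ∫⁻ y, bx y * ∫⁻ x, kTot κ₁ κ₂ c p x y ∂κ₁ p ∂κ₂ p
          + ∫⁻ x, bx x * bInf κ₁ κ₂ c p x ∂κ₂ p = κ₂ p (unitBox d) := by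
        intro p
        rw [← lintegral_add_left, ← lint_bx]
        · simp_rw [← mul_add, hi1, mul_one]
        · exact bx_meas.mul ((meas_int' κ₁ hkm).comp
            (by fun_prop : Measurable fun x : Vec d => (p, x)))
      simp_rw [this]
      rw [lintegral_map (κ₂.measurable_coe measurableSet_unitBox) hpm]
      apply lintegral_congr_ae
      filter_upwards [e2] with ω h
      rw [h]
    have hfin : ∫⁻ p, ∫⁻ y, bx y * ∫⁻ x, kTot κ₁ κ₂ c p x y ∂κ₁ p ∂κ₂ p ∂μ ≠ ⊤ := by
      intro h; rw [h] at sB; rw [← sB] at hΨfin; simp at hΨfin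
    have hrem : ∫⁻ p, ∫⁻ x, bx x * aInf κ₁ κ₂ c p x ∂κ₁ p ∂μ
        = ∫⁻ p, ∫⁻ x, bx x * bInf κ₁ κ₂ c p x ∂κ₂ p ∂μ := by
      rw [hM, hl, ← sB] at sA
      exact (ENNReal.add_right_inj hfin).1 sA
    have toA : ∫⁻ p, ∫⁻ x, bx x * aInf κ₁ κ₂ c p x ∂κ₁ p ∂μ = 0 →
        ∀ᵐ p ∂μ, ∫⁻ x, aInf κ₁ κ₂ c p x ∂κ₁ p = 0 :=
      box_zero κ₁ μ dsh_meas hμ nk₁_cov ham hac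
    have toB : ∫⁻ p, ∫⁻ x, bx x * bInf κ₁ κ₂ c p x ∂κ₂ p ∂μ = 0 →
        ∀ᵐ p ∂μ, ∫⁻ x, bInf κ₁ κ₂ c p x ∂κ₂ p = 0 :=
      box_zero κ₂ μ dsh_meas hμ nk₂_cov hbm hbc
    have bxle : ∀ x : Vec d, bx x ≤ 1 := fun x => by
      unfold bx
      exact Set.indicator_le_self' (fun _ _ => zero_le) x
    have ofz : ∀ {κ : Kernel (Measure (Vec d) × Measure (Vec d)) (Vec d)}
        {f : Measure (Vec d) × Measure (Vec d) → Vec d → ℝ≥0∞},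
        (∀ᵐ p ∂μ, ∫⁻ x, f p x ∂κ p = 0) → ∫⁻ p, ∫⁻ x, bx x * f p x ∂κ p ∂μ = 0 := by
      intro κ f h
      rw [lintegral_congr_ae (g := fun _ => 0), lintegral_zero]
      filter_upwards [h] with p hp
      rw [← nonpos_iff_eq_zero, ← hp]
      exact lintegral_mono fun x => mul_le_of_le_one_left' (bxle x)
    have both : (∀ᵐ p ∂μ, ∫⁻ x, aInf κ₁ κ₂ c p x ∂κ₁ p = 0) ∧
        (∀ᵐ p ∂μ, ∫⁻ x, bInf κ₁ κ₂ c p x ∂κ₂ p = 0) := by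
      have mA : MeasurableSet {p | ∫⁻ x, aInf κ₁ κ₂ c p x ∂κ₁ p = 0} :=
        iA (measurableSet_singleton 0)
      rcases herg {p | ∫⁻ x, aInf κ₁ κ₂ c p x ∂κ₁ p = 0} mA (by
        intro t p
        have : ∫⁻ x, aInf κ₁ κ₂ c (dsh t p) x ∂κ₁ (dsh t p) = ∫⁻ x, aInf κ₁ κ₂ c p x ∂κ₁ p := by
          rw [int_cov nk₁_cov]; simp_rw [hac]; rfl
        show _ = 0 ↔ ∫⁻ x, aInf κ₁ κ₂ c (dsh t p) x ∂κ₁ (dsh t p) = 0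
        rw [this]) with h | h
      · have hB : ∀ᵐ p ∂μ, ∫⁻ x, bInf κ₁ κ₂ c p x ∂κ₂ p = 0 := by
          have : ∀ᵐ p ∂μ, ¬ ∫⁻ x, aInf κ₁ κ₂ c p x ∂κ₁ p = 0 := by
            rw [ae_iff]
            simp only [not_not]
            rw [hμdef, Measure.map_apply hpm mA]
            exact h
          filter_upwards [this] with p hp
          exact (hzo p).resolve_left hp
        exact ⟨toA (hrem.trans (ofz hB)), hB⟩
      · have hA : ∀ᵐ p ∂μ, ∫⁻ x, aInf κ₁ κ₂ c p x ∂κ₁ p = 0 := by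
          rw [hμdef, ae_map_iff hpm.aemeasurable mA]
          exact (prob_compl_eq_zero_iff (hpm mA)).2 h
        exact ⟨hA, toB (hrem.symm.trans (ofz hA))⟩
    have b1 := ae_of_ae_map hpm.aemeasurable both.1
    have b2 := ae_of_ae_map hpm.aemeasurable both.2
    refine ⟨fun φ ψ x y => if kTot κ₁ κ₂ c (φ, ψ) x y < ⊤ then kTot κ₁ κ₂ c (φ, ψ) x y else 0,
      ?_, ?_, ?_, ?_⟩
    · exact Measurable.ite (measurableSet_lt hkm measurable_const) hkm measurable_const
    · intro φ ψ x y
      dsimp only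
      split_ifs with h
      · exact h
      · simp
    · intro t x y φ ψ
      have := hkc t (φ, ψ) x y
      simp only [dsh] at this
      simp only [this]
    · filter_upwards [b1, b2, e1, e2] with ω h1 h2 he1 he2
      have mh1 : Measurable fun x => aInf κ₁ κ₂ c (Φ ω, Ψ ω) x := ham.comp
        (by fun_prop : Measurable fun x : Vec d => ((Φ ω, Ψ ω), x))
      rw [lintegral_eq_zero_iff mh1] at h1
      have mh2 : Measurable fun x => bInf κ₁ κ₂ c (Φ ω, Ψ ω) x := hbm.comp
        (by fun_prop : Measurable fun x : Vec d => ((Φ ω, Ψ ω), x))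
      rw [lintegral_eq_zero_iff mh2] at h2
      have j1 := hi1 (Φ ω, Ψ ω)
      have j2 := hi2 (Φ ω, Ψ ω)
      rw [he1] at h1 j1
      rw [he2] at h2 j2
      constructor
      · filter_upwards [h1] with x hx
        have hx' : aInf κ₁ κ₂ c (Φ ω, Ψ ω) x = 0 := hx
        have hint := j2 x
        rw [hx', add_zero] at hint
        rw [← hint]
        apply lintegral_congr_ae
        have mk : Measurable fun y => kTot κ₁ κ₂ c (Φ ω, Ψ ω) x y := hkm.comp
          (by fun_prop : Measurable fun y : Vec d => ((Φ ω, Ψ ω), x, y))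
        filter_upwards [ae_lt_top mk (by rw [hint]; simp)] with y hy
        rw [if_pos hy]
      · filter_upwards [h2] with y hx
        have hx' : bInf κ₁ κ₂ c (Φ ω, Ψ ω) y = 0 := hx
        have hint := j1 y
        rw [hx', add_zero] at hint
        rw [← hint]
        apply lintegral_congr_ae
        have mk : Measurable fun x => kTot κ₁ κ₂ c (Φ ω, Ψ ω) x y := hkm.comp
          (by fun_prop : Measurable fun x : Vec d => ((Φ ω, Ψ ω), x, y))
        filter_upwards [ae_lt_top mk (by rw [hint]; simp)] with x hy
        rw [if_pos hy]
  · rintro ⟨K, hKm, -, hKc, hK⟩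
    have hM := mtp (nk₁ d) (nk₂ d) μ dsh_meas hμ nk₁_cov nk₂_cov (k := fun p => K p.1 p.2) hKm
      (fun t p x y => hKc t x y p.1 p.2)
    rw [lintegral_map (bx_int_meas (nk₁ d) (meas_int (nk₂ d) (f := fun p => K p.1 p.2) hKm)) hpm,
      lintegral_map (bx_int_meas (nk₂ d) (meas_int' (nk₁ d) (f := fun p => K p.1 p.2) hKm)) hpm] at hM
    rw [hlΦ, hlΨ]
    convert hM using 1
    · apply lintegral_congr_ae
      filter_upwards [e1, e2, hK] with ω h1 h2 h
      rw [h1, h2, ← lint_bx]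
      apply lintegral_congr_ae
      filter_upwards [h.1] with x hx
      simp only [hx, mul_one]
    · apply lintegral_congr_ae
      filter_upwards [e1, e2, hK] with ω h1 h2 h
      rw [h1, h2, ← lint_bx]
      apply lintegral_congr_ae
      filter_upwards [h.2] with x hx
      simp only [hx, mul_one]
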